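/- Let c > 0 and α ≥ 0, and let λ_n^{(α)}(c) = (c/(2π)) |μ_n^{(α)}(c)|² denote the eigenvalues of the operator Q_c^{(α)} = (c/(2π)) (F_c^{(α)})* F_c^{(α)}. Then for every integer n > (ec+1)/2, λ_n^{(α)}(c) ≤ (K_α / (c^{α+1} log²((2n-1)/(ec)))) · (ec/(2n-1))^{2n+α}, with K_α = (π/2)(2/e)^{α+2} Γ(α+1). -/

import Mathlib

open Real MeasureTheory intervalIntegral

/-- Generalized Rolle theorem for a family of successive derivatives. -/
lemma exists_eq_zero_of_card_lt {n : ℕ} {D : ℕ → ℝ → ℝ}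
    (hD : ∀ k x, HasDerivAt (D k) (D (k + 1) x) x) {S : Finset ℝ} (hS : n < S.card)
    (h0 : ∀ x ∈ S, D 0 x = 0) : ∃ ξ, D n ξ = 0 := by
  induction n generalizing D S with
  | zero =>
    obtain ⟨x, hx⟩ := Finset.card_pos.mp hS
    exact ⟨x, h0 x hx⟩
  | succ n ih =>
    obtain ⟨T, hTS, hT⟩ := Finset.exists_subset_card_eq (Nat.succ_le_of_lt hS)
    let e := T.orderEmbOfFin hT
    have hmem (i) : e i ∈ S := hTS (T.orderEmbOfFin_mem hT i)
    have hrolle (i : Fin (n + 1)) :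
        ∃ c ∈ Set.Ioo (e i.castSucc) (e i.succ), D 1 c = 0 :=
      exists_hasDerivAt_eq_zero (e.strictMono i.castSucc_lt_succ)
        (fun x _ => (hD 0 x).continuousAt.continuousWithinAt)
        (by rw [h0 _ (hmem _), h0 _ (hmem _)]) fun x _ => hD 0 x
    choose z hz hz0 using hrolle
    have hmono : StrictMono z := Fin.strictMono_iff_lt_succ.mpr fun i =>
      (hz i.castSucc).2.trans (hz i.succ).1
    refine ih (D := fun k => D (k + 1)) (fun k => hD (k + 1)) (S := Finset.univ.image z) ?_ ?_
    · simp [Finset.card_image_of_injective _ hmono.injective]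
    · simpa using hz0

lemma eval_iterate_derivative_T_real (n : ℕ) (x : ℝ) :
    (Polynomial.derivative^[n] (Polynomial.Chebyshev.T ℝ n)).eval x =
      n.factorial * 2 ^ (n - 1) := by
  have hdeg : (Polynomial.Chebyshev.T ℝ n).natDegree = n := by simp
  have h0 : (Polynomial.derivative^[n] (Polynomial.Chebyshev.T ℝ n)).natDegree = 0 := by
    have := Polynomial.natDegree_iterate_derivative (Polynomial.Chebyshev.T ℝ n) n
    omega
  have hlead : (Polynomial.Chebyshev.T ℝ n).coeff n = 2 ^ (n - 1) := by
    simpa [Polynomial.leadingCoeff, hdeg] using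
      Polynomial.Chebyshev.leadingCoeff_T (R := ℝ) (n : ℤ)
  rw [Polynomial.eq_C_of_natDegree_eq_zero h0, Polynomial.eval_C,
    Polynomial.coeff_iterate_derivative]
  simp [hlead, Nat.descFactorial_self]

lemma card_roots_toFinset_T_real (n : ℕ) :
    (Polynomial.Chebyshev.T ℝ n).roots.toFinset.card = n := by
  rw [Polynomial.Chebyshev.roots_T_real, Finset.val_toFinset, Finset.card_image_of_injOn,
    Finset.card_range]
  exact (Finset.range n).nodup_map_iff_injOn.mp (Polynomial.Chebyshev.roots_T_real_nodup n)

/-- A function vanishing at the Chebyshev nodes is controlled by its `n`-th derivative. -/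
lemma abs_le_of_vanish_roots_T {n : ℕ} {D : ℕ → ℝ → ℝ}
    (hD : ∀ k x, HasDerivAt (D k) (D (k + 1) x) x)
    (h0 : ∀ x ∈ (Polynomial.Chebyshev.T ℝ n).roots.toFinset, D 0 x = 0)
    {M : ℝ} (hM : ∀ x, |D n x| ≤ M) {x : ℝ} (hx : |x| ≤ 1) :
    |D 0 x| ≤ M / (n.factorial * 2 ^ (n - 1)) := by
  set p := Polynomial.Chebyshev.T ℝ n with hp
  have hM0 : 0 ≤ M := (abs_nonneg _).trans (hM 0)
  have hp0 : p ≠ 0 := by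
    intro h
    have := eval_iterate_derivative_T_real n 0
    rw [← hp, h] at this
    simp [Nat.factorial_ne_zero] at this
  by_cases hxr : x ∈ p.roots.toFinset
  · rw [h0 x hxr, abs_zero]
    positivity
  have hpx : p.eval x ≠ 0 := fun h => hxr (by simpa [hp0] using h)
  let a := D 0 x / p.eval x
  obtain ⟨ξ, hξ⟩ := exists_eq_zero_of_card_lt (n := n)
    (D := fun k t => D k t - a * (Polynomial.derivative^[k] p).eval t)
    (fun k t => by
      rw [Function.iterate_succ_apply']
      exact (hD k t).sub ((Polynomial.hasDerivAt _ t).const_mul a))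
    (S := insert x p.roots.toFinset)
    (by rw [Finset.card_insert_of_notMem hxr, card_roots_toFinset_T_real]; omega)
    (fun t ht => by
      rcases Finset.mem_insert.mp ht with rfl | ht
      · simp [a, hpx]
      · have : p.eval t = 0 := by
          simpa [hp0] using ht
        simp [h0 t ht, this])
  have hval : D n ξ = a * (n.factorial * 2 ^ (n - 1)) := by
    rw [← eval_iterate_derivative_T_real n ξ, ← hp]
    linarith
  have hT : |p.eval x| ≤ 1 := Polynomial.Chebyshev.abs_eval_T_real_le_one n hx
  have hfac : (0 : ℝ) < n.factorial * 2 ^ (n - 1) := by positivity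
  have ha : |a| ≤ M / (n.factorial * 2 ^ (n - 1)) := by
    rw [le_div_iff₀ hfac, ← abs_of_pos hfac, ← abs_mul, ← hval]
    exact hM ξ
  calc |D 0 x| = |a| * |p.eval x| := by rw [← abs_mul]; simp [a, hpx]
    _ ≤ |a| * 1 := by gcongr
    _ ≤ _ := by simpa using ha

lemma norm_le_of_vanish_roots_T {n : ℕ} {E : ℕ → ℝ → ℂ}
    (hE : ∀ k x, HasDerivAt (E k) (E (k + 1) x) x)
    (h0 : ∀ x ∈ (Polynomial.Chebyshev.T ℝ n).roots.toFinset, E 0 x = 0)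
    {M : ℝ} (hM : ∀ x, ‖E n x‖ ≤ M) {x : ℝ} (hx : |x| ≤ 1) :
    ‖E 0 x‖ ≤ M / (n.factorial * 2 ^ (n - 1)) := by
  obtain ⟨u, hu, hux⟩ : ∃ u : ℂ, ‖u‖ = 1 ∧ u * E 0 x = ‖E 0 x‖ := by
    by_cases h : E 0 x = 0
    · exact ⟨1, by simp, by simp [h]⟩
    · have hn : ((‖E 0 x‖ : ℝ) : ℂ) ≠ 0 := by simpa using h
      refine ⟨(‖E 0 x‖ : ℂ) / E 0 x, ?_, by field_simp⟩
      simp [h]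
  have key := abs_le_of_vanish_roots_T (n := n) (D := fun k t => (u * E k t).re) (M := M)
    (fun k t => Complex.reCLM.hasFDerivAt.comp_hasDerivAt t ((hE k t).const_mul u))
    (fun t ht => by simp [h0 t ht])
    (fun t => (Complex.abs_re_le_norm _).trans (by simpa [hu] using hM t)) hx
  simpa [hux] using key

/-- Differentiation under the integral sign for the finite Fourier transform. -/
lemma hasDerivAt_integral_pow_mul_exp (c : ℝ) {g : ℝ → ℂ} (hg : Continuous g) (k : ℕ) (x : ℝ) :
    HasDerivAt
      (fun x : ℝ => ∫ y in (-1 : ℝ)..1,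
        (Complex.I * c * y) ^ k * Complex.exp (Complex.I * (c * x * y)) * g y)
      (∫ y in (-1 : ℝ)..1,
        (Complex.I * c * y) ^ (k + 1) * Complex.exp (Complex.I * (c * x * y)) * g y) x := by
  have hnorm (x y : ℝ) : ‖Complex.exp (Complex.I * (c * x * y))‖ = 1 := by
    have : Complex.I * (c * x * y) = ((c * x * y : ℝ) : ℂ) * Complex.I := by push_cast; ring
    rw [this, Complex.norm_exp_ofReal_mul_I]
  refine (hasDerivAt_integral_of_dominated_loc_of_deriv_le
    (F := fun (x y : ℝ) =>
      (Complex.I * c * y) ^ k * Complex.exp (Complex.I * (c * x * y)) * g y)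
    (F' := fun (x y : ℝ) =>
      (Complex.I * c * y) ^ (k + 1) * Complex.exp (Complex.I * (c * x * y)) * g y)
    (bound := fun y => ‖(Complex.I * c * y) ^ (k + 1)‖ * ‖g y‖)
    Filter.univ_mem (.of_forall fun x => ?_) ?_ ?_ (.of_forall fun y _ x _ => ?_) ?_
    (.of_forall fun y _ x _ => ?_)).2
  · exact Continuous.aestronglyMeasurable (by fun_prop)
  · exact Continuous.intervalIntegrable (by fun_prop) _ _
  · exact Continuous.aestronglyMeasurable (by fun_prop)
  · rw [norm_mul, norm_mul, hnorm, mul_one]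
  · exact Continuous.intervalIntegrable (by fun_prop) _ _
  · have h1 : HasDerivAt (fun x : ℝ => Complex.I * (c * x * y)) (Complex.I * (c * 1 * y)) x :=
      (((Complex.ofRealCLM.hasDerivAt (x := x)).const_mul (c : ℂ)).mul_const (y : ℂ)).const_mul _
    convert! ((h1.cexp.const_mul ((Complex.I * c * y) ^ k)).mul_const (g y)) using 1
    ring

lemma sq_integral_mul_mul_le {u v w : ℝ → ℝ} (hu : Continuous u) (hv : Continuous v)
    (hw : Continuous w) (hw0 : ∀ y ∈ Set.Icc (-1 : ℝ) 1, 0 ≤ w y) :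
    (∫ y in (-1 : ℝ)..1, u y * v y * w y) ^ 2 ≤
      (∫ y in (-1 : ℝ)..1, u y ^ 2 * w y) * ∫ y in (-1 : ℝ)..1, v y ^ 2 * w y := by
  have h := discrim_le_zero (a := ∫ y in (-1 : ℝ)..1, u y ^ 2 * w y)
    (b := 2 * ∫ y in (-1 : ℝ)..1, u y * v y * w y) (c := ∫ y in (-1 : ℝ)..1, v y ^ 2 * w y)
    (fun t => by
      have hnn : 0 ≤ ∫ y in (-1 : ℝ)..1, (t * u y + v y) ^ 2 * w y :=
        integral_nonneg (by norm_num) fun y hy => mul_nonneg (sq_nonneg _) (hw0 y hy)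
      have hexp : (∫ y in (-1 : ℝ)..1, (t * u y + v y) ^ 2 * w y) =
          ∫ y in (-1 : ℝ)..1, ((t * t) * (u y ^ 2 * w y) + (2 * t) * (u y * v y * w y)
            + v y ^ 2 * w y) := by
        congr 1; ext y; ring
      rw [hexp, intervalIntegral.integral_add, intervalIntegral.integral_add,
        intervalIntegral.integral_const_mul, intervalIntegral.integral_const_mul] at hnn
      · linarith
      all_goals exact Continuous.intervalIntegrable (by fun_prop) _ _)
  unfold discrim at h
  nlinarith

lemma continuous_one_sub_sq_rpow {α : ℝ} (hα : 0 ≤ α) :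
    Continuous fun y : ℝ => (1 - y ^ 2) ^ α :=
  (by fun_prop : Continuous fun y : ℝ => 1 - y ^ 2).rpow_const fun _ => .inr hα

lemma integral_pow_mul_one_sub_sq_rpow_le {α : ℝ} (hα : 0 ≤ α) {n : ℕ} (hn : 1 ≤ n) :
    (∫ y in (-1 : ℝ)..1, (y ^ n) ^ 2 * (1 - y ^ 2) ^ α) ≤
      Gamma (α + 1) * ((n : ℝ) - 1 / 2) ^ (-(α + 1)) := by
  have hn' : (1 : ℝ) ≤ n := by exact_mod_cast hn
  set m : ℝ := (n : ℝ) - 1 / 2 with hm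
  have hm0 : 0 < m := by linarith
  have hwc := continuous_one_sub_sq_rpow hα
  have hfc : Continuous fun y : ℝ => (y ^ n) ^ 2 * (1 - y ^ 2) ^ α := by fun_prop
  have hgc : Continuous fun v : ℝ => v ^ α * exp (-(m * v)) :=
    (continuous_id.rpow_const fun _ => .inr hα).mul (by fun_prop)
  have hsymm : (∫ y in (-1 : ℝ)..0, (y ^ n) ^ 2 * (1 - y ^ 2) ^ α) =
      ∫ y in (0 : ℝ)..1, (y ^ n) ^ 2 * (1 - y ^ 2) ^ α := by
    have := intervalIntegral.integral_comp_neg (a := 0) (b := 1)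
      (fun y : ℝ => (y ^ n) ^ 2 * (1 - y ^ 2) ^ α)
    rw [neg_zero] at this
    rw [← this]
    congr 1; ext y
    rw [← pow_mul, ← pow_mul, mul_comm n 2, pow_mul, pow_mul, neg_sq]
  have hsubst := integral_comp_mul_deriv (a := 0) (b := 1) (f := fun y : ℝ => 1 - y ^ 2)
    (f' := fun y => -(2 * y)) (g := fun v : ℝ => v ^ α * exp (-(m * v)))
    (fun y _ => by simpa using (hasDerivAt_pow 2 y).const_sub 1) (by fun_prop) hgc
  have hpt (y : ℝ) (hy : y ∈ Set.Icc (0 : ℝ) 1) : (y ^ n) ^ 2 * (1 - y ^ 2) ^ α ≤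
      y * ((1 - y ^ 2) ^ α * exp (-(m * (1 - y ^ 2)))) := by
    have hw : 0 ≤ (1 - y ^ 2) ^ α := rpow_nonneg (by nlinarith [hy.1, hy.2]) _
    have hy1 : y ≤ exp (-((1 - y ^ 2) / 2)) := by
      refine (sq_le_sq₀ hy.1 (exp_pos _).le).mp ?_
      rw [← exp_nat_mul]
      have := add_one_le_exp (-(1 - y ^ 2))
      calc y ^ 2 ≤ exp (-(1 - y ^ 2)) := by linarith
        _ = _ := by congr 1; push_cast; ring
    have hpow : y ^ (2 * n - 1) ≤ exp (-(m * (1 - y ^ 2))) := by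
      calc y ^ (2 * n - 1) ≤ exp (-((1 - y ^ 2) / 2)) ^ (2 * n - 1) :=
            pow_le_pow_left₀ hy.1 hy1 _
        _ = _ := by
          rw [← exp_nat_mul, Nat.cast_sub (by omega)]
          congr 1; push_cast; ring
    have hsplit : (y ^ n) ^ 2 = y * y ^ (2 * n - 1) := by
      rw [← pow_mul, ← pow_succ']
      congr 1; omega
    rw [hsplit]
    calc _ = y * ((1 - y ^ 2) ^ α * y ^ (2 * n - 1)) := by ring
      _ ≤ _ := by have := hy.1; gcongr
  have hhalf : (∫ y in (0 : ℝ)..1, (y ^ n) ^ 2 * (1 - y ^ 2) ^ α) ≤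
      (∫ v in (0 : ℝ)..1, v ^ α * exp (-(m * v))) / 2 := by
    have hle := intervalIntegral.integral_mono_on (μ := volume) zero_le_one
      (hfc.intervalIntegrable 0 1)
      (Continuous.intervalIntegrable (by fun_prop) 0 1) hpt
    refine hle.trans_eq ?_
    have hr : (∫ y in (0 : ℝ)..1, y * ((1 - y ^ 2) ^ α * exp (-(m * (1 - y ^ 2))))) =
        (-1 / 2) * ∫ y in (0 : ℝ)..1,
          ((fun v : ℝ => v ^ α * exp (-(m * v))) ∘ fun y : ℝ => 1 - y ^ 2) y * -(2 * y) := by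
      rw [← intervalIntegral.integral_const_mul]
      congr 1; ext y
      simp only [Function.comp_apply]; ring
    rw [hr, hsubst]
    norm_num
    rw [integral_symm]
    ring
  have hgam := integral_rpow_mul_exp_neg_mul_Ioi (by linarith : 0 < α + 1) hm0
  rw [add_sub_cancel_right, one_div, inv_rpow hm0.le, ← rpow_neg hm0.le] at hgam
  have hint : IntegrableOn (fun v : ℝ => v ^ α * exp (-(m * v))) (Set.Ioi 0) := by
    by_contra h
    have hz := integral_undef h
    rw [hz] at hgam
    have : 0 < m ^ (-(α + 1)) * Gamma (α + 1) :=
      mul_pos (rpow_pos_of_pos hm0 _) (Gamma_pos_of_pos (by linarith))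
    linarith
  have hle : (∫ v in (0 : ℝ)..1, v ^ α * exp (-(m * v))) ≤
      ∫ v in Set.Ioi (0 : ℝ), v ^ α * exp (-(m * v)) := by
    rw [integral_of_le zero_le_one]
    refine setIntegral_mono_set hint ?_ Set.Ioc_subset_Ioi_self.eventuallyLE
    filter_upwards [ae_restrict_mem measurableSet_Ioi] with v hv
    exact mul_nonneg (rpow_nonneg (le_of_lt hv) _) (exp_pos _).le
  rw [← integral_add_adjacent_intervals (hfc.intervalIntegrable (-1) 0)
    (hfc.intervalIntegrable 0 1), hsymm]
  linarith

/-- Parseval's identity for finite combinations of a weighted orthonormal system. -/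
lemma integral_norm_sq_sum_mul_eq {ψ : ℕ → ℝ → ℂ} {w : ℝ → ℝ} (hw : Continuous w)
    (hcont : ∀ n, Continuous (ψ n))
    (horth : ∀ m n, (∫ y in (-1 : ℝ)..1, ψ m y * (starRingEnd ℂ) (ψ n y) * (w y : ℂ)) =
      if m = n then 1 else 0) {N : ℕ} (a : Fin N → ℂ) :
    (∫ y in (-1 : ℝ)..1, ‖∑ j, a j * ψ j y‖ ^ 2 * w y) = ∑ j, ‖a j‖ ^ 2 := by
  have hexp (y : ℝ) : ((‖∑ j, a j * ψ j y‖ ^ 2 * w y : ℝ) : ℂ) =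
      ∑ j, ∑ k, (a j * (starRingEnd ℂ) (a k)) *
        (ψ j y * (starRingEnd ℂ) (ψ k y) * (w y : ℂ)) := by
    push_cast
    rw [← Complex.mul_conj', map_sum, Finset.sum_mul_sum, Finset.sum_mul]
    refine Finset.sum_congr rfl fun j _ => ?_
    rw [Finset.sum_mul]
    refine Finset.sum_congr rfl fun k _ => ?_
    rw [map_mul]; ring
  have hc (j k : Fin N) : Continuous fun y : ℝ => (a j * (starRingEnd ℂ) (a k)) *
      (ψ j y * (starRingEnd ℂ) (ψ k y) * (w y : ℂ)) := by
    have := hcont j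
    have := Complex.continuous_conj.comp (hcont k)
    simp only [Function.comp_def] at this
    fun_prop
  apply Complex.ofReal_injective
  rw [← intervalIntegral.integral_ofReal]
  simp_rw [hexp]
  rw [intervalIntegral.integral_finsetSum
    fun j _ => (continuous_finsetSum _ fun k _ => hc j k).intervalIntegrable _ _]
  push_cast
  refine Finset.sum_congr rfl fun j _ => ?_
  rw [intervalIntegral.integral_finsetSum fun k _ => (hc j k).intervalIntegrable _ _]
  simp_rw [intervalIntegral.integral_const_mul, horth, Fin.val_inj]
  simp [Complex.mul_conj']

/-- A bound on the `n`-th eigenvalue of the weighted finite Fourier transform by the moments of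
the weight, obtained by interpolation at the Chebyshev nodes. -/
lemma norm_sq_eigenvalue_le {c : ℝ} (hc : 0 < c) {w : ℝ → ℝ} (hw : Continuous w)
    (hw0 : ∀ y ∈ Set.Icc (-1 : ℝ) 1, 0 ≤ w y) (hw1 : ∀ y ∈ Set.Icc (-1 : ℝ) 1, w y ≤ 1)
    {ψ : ℕ → ℝ → ℂ} {μ : ℕ → ℂ} (hcont : ∀ n, Continuous (ψ n))
    (heig : ∀ n, ∀ x : ℝ,
      (∫ y in (-1 : ℝ)..1, Complex.exp (Complex.I * (c * x * y)) * ψ n y * (w y : ℂ)) =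
        μ n * ψ n x)
    (horth : ∀ m n, (∫ y in (-1 : ℝ)..1, ψ m y * (starRingEnd ℂ) (ψ n y) * (w y : ℂ)) =
      if m = n then 1 else 0)
    (hdec : Antitone fun n => ‖μ n‖) (n : ℕ) :
    ‖μ n‖ ^ 2 ≤ 2 * (c ^ n / (n.factorial * 2 ^ (n - 1))) ^ 2 *
      ∫ y in (-1 : ℝ)..1, (y ^ n) ^ 2 * w y := by
  set R := (Polynomial.Chebyshev.T ℝ n).roots.toFinset with hR
  let ev : (Fin (n + 1) → ℂ) →ₗ[ℂ] (R → ℂ) :=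
    Fintype.linearCombination ℂ fun (j : Fin (n + 1)) (x : R) => μ j * ψ j x
  have hker : LinearMap.ker ev ≠ ⊥ := LinearMap.ker_ne_bot_of_finrank_lt (by
    simp [R, card_roots_toFinset_T_real])
  obtain ⟨b, hb, hb0⟩ := (Submodule.ne_bot_iff _).mp hker
  let φ : ℝ → ℂ := fun y => ∑ j, b j * ψ j y
  have hφ : Continuous φ := continuous_finsetSum _ fun j _ => (hcont j).const_mul (b j)
  let E : ℕ → ℝ → ℂ := fun k x => ∫ y in (-1 : ℝ)..1,
    (Complex.I * c * y) ^ k * Complex.exp (Complex.I * (c * x * y)) * (φ y * w y)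
  have hE0 (x : ℝ) : E 0 x = ∑ j, (b j * μ j) * ψ j x := by
    have hpt (y : ℝ) : (Complex.I * c * y) ^ 0 * Complex.exp (Complex.I * (c * x * y)) *
        (φ y * w y) = ∑ j, b j *
          (Complex.exp (Complex.I * (c * x * y)) * ψ j y * (w y : ℂ)) := by
      simp only [φ, Finset.sum_mul, Finset.mul_sum]
      exact Finset.sum_congr rfl fun j _ => by ring
    simp only [E, hpt]
    rw [intervalIntegral.integral_finsetSum]
    · refine Finset.sum_congr rfl fun j _ => ?_
      rw [intervalIntegral.integral_const_mul, heig]; ring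
    · intro j _
      have := hcont j
      exact Continuous.intervalIntegrable (by fun_prop) _ _
  set B := ∫ y in (-1 : ℝ)..1, (y ^ n) ^ 2 * w y with hB
  set N := ∑ j, ‖b j‖ ^ 2 with hN
  have hB0 : 0 ≤ B := integral_nonneg (by norm_num) fun y hy =>
    mul_nonneg (sq_nonneg _) (hw0 y hy)
  have hNpos : 0 < N := by
    obtain ⟨j, hj⟩ := Function.ne_iff.mp hb0
    exact Finset.sum_pos' (fun _ _ => by positivity)
      ⟨j, Finset.mem_univ j, by have := norm_pos_iff.mpr hj; positivity⟩
  have hφN : (∫ y in (-1 : ℝ)..1, ‖φ y‖ ^ 2 * w y) = N :=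
    integral_norm_sq_sum_mul_eq hw hcont horth b
  have hEn (x : ℝ) : ‖E n x‖ ≤ c ^ n * √(B * N) := by
    have hnorm (y : ℝ) : ‖Complex.exp (Complex.I * (c * x * y))‖ = 1 := by
      have : Complex.I * (c * x * y) = ((c * x * y : ℝ) : ℂ) * Complex.I := by push_cast; ring
      rw [this, Complex.norm_exp_ofReal_mul_I]
    have h1 : ‖E n x‖ ≤ ∫ y in (-1 : ℝ)..1, c ^ n * (|y| ^ n * ‖φ y‖ * w y) := by
      refine norm_integral_le_of_norm_le (by norm_num)
        (.of_forall fun y hy => ?_) (Continuous.intervalIntegrable (by fun_prop) _ _)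
      have := hw0 y ⟨hy.1.le, hy.2⟩
      simp only [norm_mul, norm_pow, hnorm, Complex.norm_I, Complex.norm_real, norm_eq_abs,
        abs_of_nonneg this, abs_of_pos hc]
      exact le_of_eq (by ring)
    refine h1.trans ?_
    rw [intervalIntegral.integral_const_mul]
    gcongr
    refine Real.le_sqrt_of_sq_le ?_
    refine (sq_integral_mul_mul_le (u := fun y => |y| ^ n) (v := fun y => ‖φ y‖)
      (by fun_prop) (by fun_prop) hw hw0).trans_eq ?_
    rw [hφN, hB]
    congr 2; ext y
    rw [← abs_pow, sq_abs]
  have hsup (x : ℝ) (hx : x ∈ Set.Icc (-1 : ℝ) 1) :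
      ‖E 0 x‖ ≤ c ^ n * √(B * N) / (n.factorial * 2 ^ (n - 1)) := by
    refine norm_le_of_vanish_roots_T (E := E)
      (fun k x => hasDerivAt_integral_pow_mul_exp c (by fun_prop) k x) (fun x hx => ?_) hEn
      (abs_le.mpr hx)
    have := congrFun (LinearMap.mem_ker.mp hb) ⟨x, hx⟩
    simp only [ev, Fintype.linearCombination_apply, Finset.sum_apply, Pi.smul_apply,
      smul_eq_mul, Pi.zero_apply] at this
    rw [hE0, ← this]
    exact Finset.sum_congr rfl fun j _ => by ring
  set K := c ^ n / (n.factorial * 2 ^ (n - 1)) with hK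
  have hlow : ‖μ n‖ ^ 2 * N ≤ ∫ y in (-1 : ℝ)..1, ‖E 0 y‖ ^ 2 * w y := by
    simp only [hE0]
    rw [integral_norm_sq_sum_mul_eq hw hcont horth, hN, Finset.mul_sum]
    refine Finset.sum_le_sum fun j _ => ?_
    rw [norm_mul, mul_pow, mul_comm]
    gcongr
    exact hdec (Nat.le_of_lt_succ j.2)
  have hup : (∫ y in (-1 : ℝ)..1, ‖E 0 y‖ ^ 2 * w y) ≤ ∫ _ in (-1 : ℝ)..1, K ^ 2 * (B * N) := by
    refine intervalIntegral.integral_mono_on (by norm_num) ?_ intervalIntegrable_const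
      fun y hy => ?_
    · simp only [hE0]
      have := fun j => hcont j
      exact Continuous.intervalIntegrable (by fun_prop) _ _
    · calc ‖E 0 y‖ ^ 2 * w y ≤ ‖E 0 y‖ ^ 2 * 1 := by gcongr; exact hw1 y hy
        _ ≤ (c ^ n * √(B * N) / (n.factorial * 2 ^ (n - 1))) ^ 2 := by
          rw [mul_one]; gcongr; exact hsup y hy
        _ = K ^ 2 * √(B * N) ^ 2 := by rw [hK]; ring
        _ = _ := by rw [Real.sq_sqrt (by positivity)]
  rw [intervalIntegral.integral_const] at hup
  refine le_of_mul_le_mul_right ((hlow.trans hup).trans_eq ?_) hNpos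
  simp only [smul_eq_mul]; ring

lemma factorial_sq_lower_bound {n : ℕ} (hn : 1 ≤ n) :
    8 * ((n : ℝ) - 1 / 2) * (((n : ℝ) - 1 / 2) / exp 1) ^ (2 * n) ≤
      π ^ 2 * (n.factorial : ℝ) ^ 2 := by
  have hn' : (1 : ℝ) ≤ n := by exact_mod_cast hn
  have hst := Stirling.le_factorial_stirling n
  have hsq : 2 * π * n * ((n : ℝ) / exp 1) ^ (2 * n) ≤ (n.factorial : ℝ) ^ 2 := by
    calc _ = (√(2 * π * n) * (n / exp 1) ^ n) ^ 2 := by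
          rw [mul_pow, Real.sq_sqrt (by positivity), ← pow_mul, mul_comm n 2]
      _ ≤ _ := by gcongr
  have hpi := pi_gt_three
  have hpow : (((n : ℝ) - 1 / 2) / exp 1) ^ (2 * n) ≤ ((n : ℝ) / exp 1) ^ (2 * n) := by
    have : (0 : ℝ) ≤ (n : ℝ) - 1 / 2 := by linarith
    gcongr; linarith
  calc _ ≤ 8 * n * ((n : ℝ) / exp 1) ^ (2 * n) := by
        have : (0 : ℝ) ≤ (n : ℝ) - 1 / 2 := by linarith
        gcongr; linarith
    _ ≤ π ^ 2 * (2 * π * n * ((n : ℝ) / exp 1) ^ (2 * n)) := by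
        have h8 : 8 ≤ π ^ 2 * (2 * π) := by nlinarith
        calc _ = 8 * (n * ((n : ℝ) / exp 1) ^ (2 * n)) := by ring
          _ ≤ π ^ 2 * (2 * π) * (n * ((n : ℝ) / exp 1) ^ (2 * n)) := by gcongr
          _ = _ := by ring
    _ ≤ _ := by gcongr

lemma moment_bound_le {c α : ℝ} (hc : 0 < c) (hα : 0 ≤ α) {n : ℕ} (hn : 1 ≤ n)
    (hlt : (exp 1 * c + 1) / 2 < (n : ℝ)) :
    c / (2 * π) * (2 * (c ^ n / (n.factorial * 2 ^ (n - 1))) ^ 2 *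
      (Gamma (α + 1) * ((n : ℝ) - 1 / 2) ^ (-(α + 1)))) ≤
    (π / 2) * (2 / exp 1) ^ (α + 2) * Gamma (α + 1) /
      (c ^ (α + 1) * (log ((2 * (n : ℝ) - 1) / (exp 1 * c))) ^ 2) *
      (exp 1 * c / (2 * (n : ℝ) - 1)) ^ (2 * (n : ℝ) + α) := by
  have hn' : (1 : ℝ) ≤ n := by exact_mod_cast hn
  set m : ℝ := (n : ℝ) - 1 / 2 with hm
  have hm0 : 0 < m := by linarith
  have hG : 0 < Gamma (α + 1) := Gamma_pos_of_pos (by linarith)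
  have he : 0 < exp 1 := exp_pos 1
  have h2m : 2 * (n : ℝ) - 1 = 2 * m := by rw [hm]; ring
  set s : ℝ := exp 1 * c / (2 * m) with hs
  have hs0 : 0 < s := by positivity
  have hs1 : s < 1 := by rw [hs, div_lt_one (by positivity)]; linarith
  have hinv : 2 * m / (exp 1 * c) = s⁻¹ := by rw [hs, inv_div]
  have hcs : c = s * (2 / exp 1) * m := by rw [hs]; field_simp
  rw [h2m, hinv]
  set L := log s⁻¹ with hL
  have hL0 : 0 < L := log_pos ((one_lt_inv₀ hs0).mpr hs1)
  have hsL : s * L ≤ 1 := by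
    have := log_le_sub_one_of_pos (inv_pos.mpr hs0)
    calc s * L ≤ s * s⁻¹ := by gcongr; linarith
      _ = 1 := mul_inv_cancel₀ hs0.ne'
  have hrhs : (π / 2) * (2 / exp 1) ^ (α + 2) * Gamma (α + 1) / (c ^ (α + 1) * L ^ 2) *
      s ^ (2 * (n : ℝ) + α) =
      (π / 2) * (2 / exp 1) ^ 2 * Gamma (α + 1) * s ^ (2 * n) / (c * m ^ α * L ^ 2) := by
    have h1 : (2 / exp 1) ^ (α + 2) = (2 / exp 1) ^ α * (2 / exp 1) ^ 2 := by
      rw [rpow_add (by positivity)]; norm_cast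
    have h2 : c ^ (α + 1) = s ^ α * (2 / exp 1) ^ α * m ^ α * c := by
      rw [rpow_add hc, rpow_one, ← mul_rpow hs0.le (by positivity),
        ← mul_rpow (by positivity) hm0.le, ← hcs]
    have h3 : s ^ (2 * (n : ℝ) + α) = s ^ (2 * n) * s ^ α := by
      rw [rpow_add hs0]; norm_cast
    rw [h1, h2, h3]
    have : 0 < s ^ α := rpow_pos_of_pos hs0 _
    have : 0 < (2 / exp 1) ^ α := by positivity
    have : 0 < m ^ α := by positivity
    field_simp
  have hlhs : c / (2 * π) * (2 * (c ^ n / (n.factorial * 2 ^ (n - 1))) ^ 2 *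
      (Gamma (α + 1) * m ^ (-(α + 1)))) =
      4 / π * c * s ^ (2 * n) * (m / exp 1) ^ (2 * n) / (n.factorial : ℝ) ^ 2 *
        Gamma (α + 1) / (m ^ α * m) := by
    have h2 : (2 : ℝ) ^ (n - 1) = 2 ^ n / 2 := by
      rw [eq_div_iff two_ne_zero, ← pow_succ]; congr 1; omega
    have hcp : (c / 2) ^ (2 * n) = s ^ (2 * n) * (m / exp 1) ^ (2 * n) := by
      rw [← mul_pow]; congr 1; rw [hs]; field_simp
    rw [mul_assoc _ (s ^ _), ← hcp, rpow_neg hm0.le, rpow_add hm0, rpow_one, h2, mul_comm 2 n,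
      pow_mul, div_pow c 2 n]
    have : 0 < m ^ α := by positivity
    field_simp
    ring
  rw [hrhs, hlhs]
  have hfac := factorial_sq_lower_bound hn
  rw [← hm] at hfac
  have hmα : 0 < m ^ α := by positivity
  have hfp : (0 : ℝ) < n.factorial := by positivity
  have hkey : 4 / π * c ^ 2 * (m / exp 1) ^ (2 * n) * L ^ 2 ≤
      (π / 2) * (2 / exp 1) ^ 2 * (n.factorial : ℝ) ^ 2 * m := by
    have hid : 4 / π * c ^ 2 * (m / exp 1) ^ (2 * n) * L ^ 2 =
        (2 / exp 1) ^ 2 * m / (2 * π) * (8 * m * (m / exp 1) ^ (2 * n)) * (s * L) ^ 2 := by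
      rw [hcs]; field_simp; ring
    rw [hid]
    calc _ ≤ (2 / exp 1) ^ 2 * m / (2 * π) * (π ^ 2 * (n.factorial : ℝ) ^ 2) * 1 ^ 2 := by
          gcongr
      _ = _ := by field_simp
  calc _ = (4 / π * c ^ 2 * (m / exp 1) ^ (2 * n) * L ^ 2) *
        (s ^ (2 * n) * Gamma (α + 1) / (c * L ^ 2 * (n.factorial : ℝ) ^ 2 * m ^ α * m)) := by
        field_simp
    _ ≤ ((π / 2) * (2 / exp 1) ^ 2 * (n.factorial : ℝ) ^ 2 * m) *
        (s ^ (2 * n) * Gamma (α + 1) / (c * L ^ 2 * (n.factorial : ℝ) ^ 2 * m ^ α * m)) := by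
        gcongr
    _ = _ := by field_simp

/-- Decay of the eigenvalues `λ_n^{(α)}(c) = (c/(2π))|μ_n^{(α)}(c)|²` of the operator
`Q_c^{(α)} = (c/(2π)) (F_c^{(α)})^* F_c^{(α)}`, where `μ_n` are the eigenvalues of the weighted
finite Fourier transform `F_c^{(α)} f(x) = ∫_{-1}^1 e^{icxy} f(y)(1-y²)^α dy`, hypothesized as a
complete orthonormal system of continuous eigenfunctions with decreasing eigenvalue moduli.
Then for every integer `n > (ec+1)/2`,
`λ_n ≤ (K_α/(c^{α+1} log²((2n-1)/(ec)))) (ec/(2n-1))^{2n+α}` with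
`K_α = (π/2)(2/e)^{α+2} Γ(α+1)`. -/
theorem lambda_decay (c α : ℝ) (hc : 0 < c) (hα : 0 ≤ α)
    (ψ : ℕ → ℝ → ℂ) (μ : ℕ → ℂ)
    (hcont : ∀ n, Continuous (ψ n))
    (heig : ∀ n, ∀ x : ℝ,
      (∫ y in (-1 : ℝ)..1, Complex.exp (Complex.I * (c * x * y)) * ψ n y *
          (((1 - y ^ 2) ^ α : ℝ) : ℂ)) = μ n * ψ n x)
    (horth : ∀ m n, (∫ y in (-1 : ℝ)..1, ψ m y * (starRingEnd ℂ) (ψ n y) *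
        (((1 - y ^ 2) ^ α : ℝ) : ℂ)) = if m = n then 1 else 0)
    (hdec : ∀ n, ‖μ (n + 1)‖ ≤ ‖μ n‖)
    (hcomplete : ∀ f : ℝ → ℂ, Continuous f →
      (∀ n, (∫ y in (-1 : ℝ)..1, f y * (starRingEnd ℂ) (ψ n y) *
          (((1 - y ^ 2) ^ α : ℝ) : ℂ)) = 0) → ∀ x ∈ Set.Icc (-1 : ℝ) 1, f x = 0) :
    ∀ n : ℕ, (Real.exp 1 * c + 1) / 2 < (n : ℝ) →
      c / (2 * π) * ‖μ n‖ ^ 2 ≤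
        (π / 2) * (2 / Real.exp 1) ^ (α + 2) * Real.Gamma (α + 1) /
          (c ^ (α + 1) * (Real.log ((2 * (n : ℝ) - 1) / (Real.exp 1 * c))) ^ 2) *
          (Real.exp 1 * c / (2 * (n : ℝ) - 1)) ^ (2 * (n : ℝ) + α) := by
  intro n hlt
  have hn : 1 ≤ n := by
    rcases Nat.eq_zero_or_pos n with rfl | h
    · have : 0 < Real.exp 1 * c := by positivity
      norm_num at hlt
      linarith
    · exact h
  refine le_trans ?_ (moment_bound_le hc hα hn hlt)
  have hsq {y : ℝ} (hy : y ∈ Set.Icc (-1 : ℝ) 1) : 0 ≤ 1 - y ^ 2 := by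
    nlinarith [hy.1, hy.2]
  have hμ := norm_sq_eigenvalue_le hc (continuous_one_sub_sq_rpow hα)
    (fun y hy => rpow_nonneg (hsq hy) α)
    (fun y hy => rpow_le_one (hsq hy) (by nlinarith [sq_nonneg y]) hα)
    hcont heig horth (antitone_nat_of_succ_le hdec) n
  have hint := integral_pow_mul_one_sub_sq_rpow_le hα hn
  gcongr
  exact hμ.trans (by gcongr)
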